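/- Let $A_\epsilon \in \mathbb{R}^{N \times N}$, $B_\epsilon \in \mathbb{R}^{N \times q}$, $G_\epsilon \in \mathbb{R}^{N \times s}$, let $G$ be symmetric positive definite, and suppose $\lVert A_\epsilon^i \rVert_G \leq M\gamma^i$ for all $i \geq 0$ for some $M \geq 1$ and $\gamma \in (0,1)$. Let $\underline{k} = k_0 - 2\tau$ for an integer $\tau \geq 1$, let $\epsilon_{\underline{k}}$ satisfy $\lVert \epsilon_{\underline{k}} \rVert_G \leq \eta_{\underline{k}}$, and let $r_j, \omega_j$ be sequences with $\lVert B_\epsilon r_j \rVert_G \leq C_r$ and $\lVert G_\epsilon \omega_j \rVert_G \leq C_\omega$ for all $j \geq \underline{k}$. Define, for $k > \underline{k} + \tau$, $\epsilon_k^{(1)} = A_\epsilon^{k - \underline{k}} \epsilon_{\underline{k}} + \sum_{j=\underline{k}}^{k-\tau-1} A_\epsilon^{k-1-j}(B_\epsilon r_j + G_\epsilon \omega_j)$. Then for all $k \geq k_0$: $\lVert \epsilon_k^{(1)} \rVert_G \leq M\gamma^{2\tau}\eta_{\underline{k}} + \frac{M\gamma^\tau(C_r + C_\omega)}{1-\gamma}$.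 -/

import Mathlib

open Matrix

/-- Weighted norm `‖x‖_G = √(xᵀ G x)` for a positive definite weighting matrix `G`. -/
noncomputable def normG {N : ℕ} (G : Matrix (Fin N) (Fin N) ℝ) (x : Fin N → ℝ) : ℝ :=
  Real.sqrt (x ⬝ᵥ G.mulVec x)

/-- Induced weighted matrix norm `‖A‖_G = sup_{x ≠ 0} ‖Ax‖_G / ‖x‖_G`. -/
noncomputable def matNormG {N : ℕ} (G A : Matrix (Fin N) (Fin N) ℝ) : ℝ :=
  sSup {c | ∃ x : Fin N → ℝ, x ≠ 0 ∧ c = normG G (A.mulVec x) / normG G x}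

/-!
An input entering at time `j ≤ k - τ - 1` has been propagated by `A ^ (k - 1 - j)`, an exponent of
at least `τ`, when it reaches time `k`. Hence the contributions of the old inputs are dominated by
the geometric tail `M * (Cr + Cω) * ∑ i ≥ τ, γ ^ i`. The weighted norm is the norm of the inner
product `xᵀ G y`, and the supremum defining the induced norm is finite because linear maps on a
finite-dimensional space are bounded.
-/

section GeometricDecay

theorem sum_Ico_pow_sub_le_of_lt_one {K : Type*} [Field K] [LinearOrder K] [IsStrictOrderedRing K]
    {γ : K} (hγ₀ : 0 ≤ γ) (hγ₁ : γ < 1) (m : ℕ) {n k : ℕ} (hn : n ≤ k + 1) :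
    ∑ j ∈ Finset.Ico m n, γ ^ (k - j) ≤ γ ^ (k + 1 - n) / (1 - γ) := by
  rw [Finset.sum_Ico_reflect (γ ^ ·) m hn]
  exact geom_sum_Ico_le_of_lt_one hγ₀ hγ₁

variable {E : Type*} [AddCommGroup E] {p : AddGroupSeminorm E} {Φ : ℕ → E → E} {M γ : ℝ}

theorem seminorm_apply_le_of_geometric_decay (hM : 0 ≤ M) (hγ₀ : 0 ≤ γ) (hγ₁ : γ ≤ 1)
    (hΦ : ∀ i x, p (Φ i x) ≤ M * γ ^ i * p x) {n i : ℕ} (hni : n ≤ i)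
    {x : E} {η : ℝ} (hx : p x ≤ η) :
    p (Φ i x) ≤ M * γ ^ n * η := by
  have hη : 0 ≤ η := (apply_nonneg p x).trans hx
  calc p (Φ i x) ≤ M * γ ^ i * p x := hΦ i x
    _ ≤ M * γ ^ i * η := by gcongr
    _ ≤ M * γ ^ n * η := by gcongr M * ?_ * η; exact pow_le_pow_of_le_one hγ₀ hγ₁ hni

theorem seminorm_sum_le_of_geometric_decay (hM : 0 ≤ M) (hγ₀ : 0 ≤ γ) (hγ₁ : γ < 1)
    (hΦ : ∀ i x, p (Φ i x) ≤ M * γ ^ i * p x) {m n k : ℕ} (hn : n ≤ k + 1)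
    {d : ℕ → E} {C : ℝ} (hC : 0 ≤ C) (hd : ∀ j ∈ Finset.Ico m n, p (d j) ≤ C) :
    p (∑ j ∈ Finset.Ico m n, Φ (k - j) (d j)) ≤ M * γ ^ (k + 1 - n) * C / (1 - γ) := by
  calc p (∑ j ∈ Finset.Ico m n, Φ (k - j) (d j))
      ≤ ∑ j ∈ Finset.Ico m n, p (Φ (k - j) (d j)) :=
        Finset.le_sum_of_subadditive p (map_zero p).le (map_add_le_add p) _ _
    _ ≤ ∑ j ∈ Finset.Ico m n, M * γ ^ (k - j) * C :=
        Finset.sum_le_sum fun j hj =>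
          seminorm_apply_le_of_geometric_decay hM hγ₀ hγ₁.le hΦ le_rfl (hd j hj)
    _ = M * (∑ j ∈ Finset.Ico m n, γ ^ (k - j)) * C := by
        rw [Finset.mul_sum, Finset.sum_mul]
    _ ≤ M * (γ ^ (k + 1 - n) / (1 - γ)) * C := by
        gcongr
        exact sum_Ico_pow_sub_le_of_lt_one hγ₀ hγ₁ m hn
    _ = M * γ ^ (k + 1 - n) * C / (1 - γ) := by ring

end GeometricDecay

theorem exists_norm_apply_le_of_finiteDimensional {𝕜 : Type*} [NontriviallyNormedField 𝕜]
    [CompleteSpace 𝕜] {E F : Type*} [NormedAddCommGroup E] [NormedSpace 𝕜 E]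
    [FiniteDimensional 𝕜 E] [SeminormedAddCommGroup F] [NormedSpace 𝕜 F] (f : E →ₗ[𝕜] F) :
    ∃ C, ∀ x, ‖f x‖ ≤ C * ‖x‖ :=
  ⟨‖LinearMap.toContinuousLinearMap f‖, (LinearMap.toContinuousLinearMap f).le_opNorm⟩

section WeightedNorm

variable {N : ℕ} {G : Matrix (Fin N) (Fin N) ℝ}

theorem normG_nonneg (G : Matrix (Fin N) (Fin N) ℝ) (x : Fin N → ℝ) : 0 ≤ normG G x :=
  Real.sqrt_nonneg _

theorem normG_eq_norm (hG : G.PosSemidef) (x : Fin N → ℝ) :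
    normG G x = (G.toSeminormedAddCommGroup hG).norm x :=
  congrArg Real.sqrt (dotProduct_comm x (G *ᵥ x))

/-- The weighted norm `‖·‖_G` bundled as a seminorm on the additive group `Fin N → ℝ`, so that the
estimates for geometrically decaying families apply to it. -/
noncomputable def normGSeminorm (hG : G.PosSemidef) : AddGroupSeminorm (Fin N → ℝ) where
  toFun := normG G
  map_zero' := by simp [normG]
  neg' x := by simp [normG, mulVec_neg]
  add_le' x y := by
    simpa only [normG_eq_norm hG] using
      @norm_add_le _ (G.toSeminormedAddCommGroup hG).toSeminormedAddGroup x y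

theorem normG_add_le (hG : G.PosSemidef) (x y : Fin N → ℝ) :
    normG G (x + y) ≤ normG G x + normG G y :=
  map_add_le_add (normGSeminorm hG) x y

theorem normG_pos (hG : G.PosDef) {x : Fin N → ℝ} (hx : x ≠ 0) : 0 < normG G x :=
  Real.sqrt_pos.mpr (hG.dotProduct_mulVec_pos hx)

theorem exists_normG_mulVec_le (hG : G.PosDef) (A : Matrix (Fin N) (Fin N) ℝ) :
    ∃ C, ∀ x, normG G (A *ᵥ x) ≤ C * normG G x := by
  simp only [normG_eq_norm hG.posSemidef]
  -- The instances are explicit because inference would find the sup norm on `Fin N → ℝ`.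
  exact @exists_norm_apply_le_of_finiteDimensional ℝ _ _ (Fin N → ℝ) (Fin N → ℝ)
    (G.toNormedAddCommGroup hG) (G.toInnerProductSpace hG.posSemidef).toNormedSpace _
    (G.toSeminormedAddCommGroup hG.posSemidef)
    (G.toInnerProductSpace hG.posSemidef).toNormedSpace A.mulVecLin

theorem bddAbove_normG_mulVec_div (hG : G.PosDef) (A : Matrix (Fin N) (Fin N) ℝ) :
    BddAbove {c | ∃ x : Fin N → ℝ, x ≠ 0 ∧ c = normG G (A *ᵥ x) / normG G x} := by
  obtain ⟨C, hC⟩ := exists_normG_mulVec_le hG A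
  refine ⟨C, ?_⟩
  rintro _ ⟨x, hx, rfl⟩
  exact (div_le_iff₀ (normG_pos hG hx)).mpr (hC x)

theorem normG_mulVec_le (hG : G.PosDef) (A : Matrix (Fin N) (Fin N) ℝ) (x : Fin N → ℝ) :
    normG G (A *ᵥ x) ≤ matNormG G A * normG G x := by
  rcases eq_or_ne x 0 with rfl | hx
  · simp [normG]
  · exact (div_le_iff₀ (normG_pos hG hx)).mp
      (le_csSup (bddAbove_normG_mulVec_div hG A) ⟨x, hx, rfl⟩)

end WeightedNorm

/-- **Bound on `ε_k⁽¹⁾` (inequality (10) of the paper).**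
With `‖A_ε^i‖_G ≤ M γ^i` (`M ≥ 1`, `γ ∈ (0,1)`), `‖ε_k̲‖_G ≤ η_k̲`,
`‖B_ε r_j‖_G ≤ C_r` and `‖G_ε ω_j‖_G ≤ C_ω` for all `j ≥ k̲` (where
`k̲ = k₀ - 2τ`, `τ ≥ 1`), the term
`ε_k⁽¹⁾ = A_ε^{k-k̲} ε_k̲ + ∑_{j=k̲}^{k-τ-1} A_ε^{k-1-j}(B_ε r_j + G_ε ω_j)`
satisfies, for all `k ≥ k₀`,
`‖ε_k⁽¹⁾‖_G ≤ M γ^{2τ} η_k̲ + M γ^τ (C_r + C_ω)/(1-γ)`. -/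
theorem eps1_bound
    (N q s : ℕ)
    (Aeps : Matrix (Fin N) (Fin N) ℝ) (Beps : Matrix (Fin N) (Fin q) ℝ)
    (Geps : Matrix (Fin N) (Fin s) ℝ)
    (G : Matrix (Fin N) (Fin N) ℝ) (hGsymm : G.IsSymm) (hGpd : G.PosDef)
    (M γ : ℝ) (hM : 1 ≤ M) (hγ : 0 < γ ∧ γ < 1)
    (hA : ∀ i : ℕ, matNormG G (Aeps ^ i) ≤ M * γ ^ i)
    (kund τ k₀ : ℕ) (hτ : 1 ≤ τ) (hk₀ : k₀ = kund + 2 * τ)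
    (εinit : Fin N → ℝ) (η : ℝ) (hinit : normG G εinit ≤ η)
    (r : ℕ → Fin q → ℝ) (ω : ℕ → Fin s → ℝ)
    (Cr Cω : ℝ)
    (hCr : ∀ j ≥ kund, normG G (Beps.mulVec (r j)) ≤ Cr)
    (hCω : ∀ j ≥ kund, normG G (Geps.mulVec (ω j)) ≤ Cω) :
    ∀ k ≥ k₀,
      normG G ((Aeps ^ (k - kund)).mulVec εinit +
        ∑ j ∈ Finset.Ico kund (k - τ),
          (Aeps ^ (k - 1 - j)).mulVec (Beps.mulVec (r j) + Geps.mulVec (ω j))) ≤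
      M * γ ^ (2 * τ) * η + M * γ ^ τ * (Cr + Cω) / (1 - γ) := by
  intro k hk
  have hG := hGpd.posSemidef
  have hM₀ : 0 ≤ M := zero_le_one.trans hM
  have decay (i : ℕ) (x : Fin N → ℝ) : normG G (Aeps ^ i *ᵥ x) ≤ M * γ ^ i * normG G x :=
    (normG_mulVec_le hGpd _ x).trans (mul_le_mul_of_nonneg_right (hA i) (normG_nonneg G x))
  have input_le (j : ℕ) (hj : kund ≤ j) : normG G (Beps *ᵥ r j + Geps *ᵥ ω j) ≤ Cr + Cω :=
    (normG_add_le hG _ _).trans (add_le_add (hCr j hj) (hCω j hj))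
  have hC : 0 ≤ Cr + Cω := (normG_nonneg G _).trans (input_le kund le_rfl)
  have initial_le : normG G (Aeps ^ (k - kund) *ᵥ εinit) ≤ M * γ ^ (2 * τ) * η :=
    seminorm_apply_le_of_geometric_decay (p := normGSeminorm hG) (Φ := fun i x => Aeps ^ i *ᵥ x)
      hM₀ hγ.1.le hγ.2.le decay (by omega) hinit
  have inputs_le := seminorm_sum_le_of_geometric_decay (p := normGSeminorm hG)
    (Φ := fun i x => Aeps ^ i *ᵥ x) (n := k - τ) (k := k - 1) hM₀ hγ.1.le hγ.2 decay (by omega) hC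
    fun j hj => input_le j (Finset.mem_Ico.mp hj).1
  rw [show k - 1 + 1 - (k - τ) = τ by omega] at inputs_le
  exact (normG_add_le hG _ _).trans (add_le_add initial_le inputs_le)
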